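/- Let (X,f) and (Y,g) be transitive Smale spaces and π : X → Y a factor map that is both u-resolving and s-resolving. Then π is constant-to-one: there exists k ∈ ℕ such that every y ∈ Y has exactly k preimages. -/

import Mathlib

open Filter Topology Set

/-- `f` is expansive with expansive constant `c`. -/
def Expansive {X : Type*} [MetricSpace X] (f : Equiv.Perm X) (c : ℝ) : Prop :=
  ∀ p q : X, p ≠ q → ∃ n : ℤ, c < dist ((f ^ n) p) ((f ^ n) q)

/-- The ε-stable set of `x`. -/
def Ws {X : Type*} [MetricSpace X] (f : Equiv.Perm X) (ε : ℝ) (x : X) : Set X :=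
  {y | ∀ n : ℕ, dist ((f ^ (n : ℤ)) x) ((f ^ (n : ℤ)) y) < ε}

/-- The ε-unstable set of `x`. -/
def Wu {X : Type*} [MetricSpace X] (f : Equiv.Perm X) (ε : ℝ) (x : X) : Set X :=
  {y | ∀ n : ℕ, dist ((f ^ (-(n : ℤ))) x) ((f ^ (-(n : ℤ))) y) < ε}

/-- The stable set of `x`. -/
def stableSet {X : Type*} [MetricSpace X] (f : Equiv.Perm X) (x : X) : Set X :=
  {y | Filter.Tendsto (fun n : ℕ => dist ((f ^ (n : ℤ)) x) ((f ^ (n : ℤ)) y))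
    Filter.atTop (nhds 0)}

/-- The unstable set of `x`. -/
def unstableSet {X : Type*} [MetricSpace X] (f : Equiv.Perm X) (x : X) : Set X :=
  {y | Filter.Tendsto (fun n : ℕ => dist ((f ^ (-(n : ℤ))) x) ((f ^ (-(n : ℤ))) y))
    Filter.atTop (nhds 0)}

/-- Canonical coordinates: for all sufficiently small ε > 0 there is δ > 0 such that
points at distance < δ have a unique bracket `[x,y] = W^s_ε(x) ∩ W^u_ε(y)`. -/
def CanonicalCoords {X : Type*} [MetricSpace X] (f : Equiv.Perm X) : Prop :=
  ∃ ε₀ > 0, ∀ ε : ℝ, 0 < ε → ε ≤ ε₀ → ∃ δ > 0, ∀ x y : X, dist x y < δ →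
    ∃! z, z ∈ Ws f ε x ∩ Wu f ε y

/-- A Smale space: an expansive homeomorphism with canonical coordinates. -/
def IsSmale {X : Type*} [MetricSpace X] (f : Equiv.Perm X) : Prop :=
  Continuous (⇑f) ∧ Continuous (⇑f.symm) ∧ (∃ c > 0, Expansive f c) ∧ CanonicalCoords f

/-- Topological transitivity. -/
def TopTransitive {X : Type*} [MetricSpace X] (f : Equiv.Perm X) : Prop :=
  ∀ U V : Set X, IsOpen U → IsOpen V → U.Nonempty → V.Nonempty →
    ∃ n : ℕ, ((f ^ (n : ℤ)) ⁻¹' U ∩ V).Nonempty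

/-- A periodic point of `f`. -/
def IsPeriodicPoint {X : Type*} [MetricSpace X] (f : Equiv.Perm X) (p : X) : Prop :=
  ∃ N : ℕ, 0 < N ∧ (f ^ (N : ℤ)) p = p

/-- A factor map (surjective continuous semiconjugacy). -/
def IsFactorMap {X Y : Type*} [MetricSpace X] [MetricSpace Y]
    (F : Equiv.Perm X) (f : Equiv.Perm Y) (π : X → Y) : Prop :=
  Continuous π ∧ Function.Surjective π ∧ ∀ x, π (F x) = f (π x)

/-- A map is u-resolving if it is injective on unstable sets. -/
def UResolving {X Y : Type*} [MetricSpace X] (F : Equiv.Perm X) (π : X → Y) : Prop :=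
  ∀ x : X, Set.InjOn π (unstableSet F x)

/-- A map is s-resolving if it is injective on stable sets. -/
def SResolving {X Y : Type*} [MetricSpace X] (F : Equiv.Perm X) (π : X → Y) : Prop :=
  ∀ x : X, Set.InjOn π (stableSet F x)

/-! A factor map of Smale spaces that is injective on stable and unstable sets is injective on
balls of a uniform radius, so its fibres are finite and uniformly separated. Near a point `y₀`
whose fibre has minimal cardinality, separation forces every fibre to shadow the fibre of `y₀`, so
nearby points can be lifted to nearby points. If the forward orbit of `x` passes over a
neighbourhood of `y₀`, lifting there and pulling back along the orbit lifts a whole local stable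
set of `π x` to a local stable set of `x`, at a scale independent of `x`; backward orbits do the
same for unstable sets. By transitivity both happen for a dense set of `x`, where the local
product structure then makes `π` open at a uniform scale. A uniformly open map with separated
finite fibres has locally constant fibre cardinality, and an invariant locally constant function
on a transitive system is constant. -/

open Function Metric

section Dynamics

variable {X : Type*} [MetricSpace X] {f : Equiv.Perm X} {c ε ε' : ℝ} {x y : X}

lemma mem_ws_iff_iterate : y ∈ Ws f ε x ↔ ∀ n : ℕ, dist (f^[n] x) (f^[n] y) < ε := by
  simp only [Ws, mem_ofPred_eq, zpow_natCast, Equiv.Perm.iterate_eq_pow]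

lemma wu_eq_ws_inv (f : Equiv.Perm X) (ε : ℝ) (x : X) : Wu f ε x = Ws f⁻¹ ε x := by
  simp only [Wu, Ws, inv_zpow']

lemma ws_eq_wu_inv (f : Equiv.Perm X) (ε : ℝ) (x : X) : Ws f ε x = Wu f⁻¹ ε x := by
  rw [wu_eq_ws_inv, inv_inv]

lemma unstableSet_eq_stableSet_inv (f : Equiv.Perm X) (x : X) :
    unstableSet f x = stableSet f⁻¹ x := by
  simp only [unstableSet, stableSet, inv_zpow']

lemma stableSet_eq_unstableSet_inv (f : Equiv.Perm X) (x : X) :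
    stableSet f x = unstableSet f⁻¹ x := by
  rw [unstableSet_eq_stableSet_inv, inv_inv]

lemma ws_mono (hε : ε ≤ ε') : Ws f ε x ⊆ Ws f ε' x :=
  fun _ hy n => (hy n).trans_le hε

lemma wu_mono (hε : ε ≤ ε') : Wu f ε x ⊆ Wu f ε' x :=
  fun _ hy n => (hy n).trans_le hε

lemma mem_ws_self (hε : 0 < ε) : x ∈ Ws f ε x := fun n => by simpa using hε

lemma mem_wu_self (hε : 0 < ε) : x ∈ Wu f ε x := fun n => by simpa using hε

lemma mem_ws_comm : y ∈ Ws f ε x ↔ x ∈ Ws f ε y := by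
  simp only [Ws, mem_ofPred_eq, dist_comm]

lemma mem_wu_comm : y ∈ Wu f ε x ↔ x ∈ Wu f ε y := by
  simp only [Wu, mem_ofPred_eq, dist_comm]

lemma dist_lt_of_mem_ws (hy : y ∈ Ws f ε x) : dist x y < ε := hy 0

lemma dist_lt_of_mem_wu (hy : y ∈ Wu f ε x) : dist x y < ε := hy 0

lemma mem_ws_iff_dist_lt_and_apply_mem :
    y ∈ Ws f ε x ↔ dist x y < ε ∧ f y ∈ Ws f ε (f x) := by
  simp only [mem_ws_iff_iterate, ← iterate_succ_apply]
  exact Nat.and_forall_add_one.symm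

lemma mem_stableSet_self : x ∈ stableSet f x := by simp [stableSet]

lemma mem_unstableSet_self : x ∈ unstableSet f x := by simp [unstableSet]

lemma Expansive.inv (hf : Expansive f c) : Expansive f⁻¹ c := fun p q hpq =>
  let ⟨n, hn⟩ := hf p q hpq
  ⟨-n, by simpa using hn⟩

lemma IsSmale.inv (hf : IsSmale f) : IsSmale f⁻¹ := by
  obtain ⟨hcont, hcont_symm, ⟨c, hc, hexp⟩, ε₀, hε₀, hbracket⟩ := hf
  refine ⟨hcont_symm, hcont, ⟨c, hc, hexp.inv⟩, ε₀, hε₀, fun ε hε hle => ?_⟩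
  obtain ⟨δ, hδ, hδ'⟩ := hbracket ε hε hle
  refine ⟨δ, hδ, fun x y hxy => ?_⟩
  rw [← wu_eq_ws_inv, ← ws_eq_wu_inv, inter_comm]
  exact hδ' y x (by rwa [dist_comm])

lemma TopTransitive.inv (hf : TopTransitive f) : TopTransitive f⁻¹ := by
  intro U V hU hV hU' hV'
  obtain ⟨n, z, hzV, hzU⟩ := hf V U hV hU hV' hU'
  exact ⟨n, (f ^ (n : ℤ)) z, by simpa using hzU, hzV⟩

lemma TopTransitive.dense_iUnion_preimage (hf : TopTransitive f) {O : Set X} (hO : IsOpen O)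
    (hne : O.Nonempty) : Dense (⋃ n : ℕ, f^[n] ⁻¹' O) := by
  refine dense_iff_inter_open.2 fun V hV hVne => ?_
  obtain ⟨n, z, hzO, hzV⟩ := hf O V hO hV hne hVne
  exact ⟨z, hzV, mem_iUnion.2 ⟨n, by simpa [Equiv.Perm.iterate_eq_pow] using hzO⟩⟩

lemma TopTransitive.eq_of_isLocallyConstant (hf : TopTransitive f) {α : Type*} {φ : X → α}
    (hφ : IsLocallyConstant φ) (hinv : ∀ x, φ (f x) = φ x) (x y : X) : φ x = φ y := by
  obtain ⟨n, z, hzx, hzy⟩ := hf (φ ⁻¹' {φ x}) (φ ⁻¹' {φ y}) (hφ _) (hφ _) ⟨x, rfl⟩ ⟨y, rfl⟩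
  have hiter : φ (f^[n] z) = φ z :=
    ((show Semiconj φ f id from hinv).iterate_right n z).trans (by rw [iterate_id, id])
  calc φ x = φ (f^[n] z) := by simpa [Equiv.Perm.iterate_eq_pow, eq_comm] using hzx
    _ = φ z := hiter
    _ = φ y := hzy

lemma continuous_zpow_perm (hf : Continuous f) (hf' : Continuous f.symm) (n : ℤ) :
    Continuous ⇑(f ^ n) := by
  obtain ⟨k, rfl | rfl⟩ := n.eq_nat_or_neg
  · simpa [Equiv.Perm.iterate_eq_pow] using hf.iterate k
  · have hinv : Continuous ⇑f⁻¹ := hf'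
    simpa only [zpow_neg, zpow_natCast, ← inv_pow, Equiv.Perm.iterate_eq_pow] using hinv.iterate k

lemma Expansive.ws_subset_stableSet [CompactSpace X] (hexp : Expansive f c) (hf : Continuous f)
    (hf' : Continuous f.symm) : Ws f c x ⊆ stableSet f x := by
  intro y hy
  -- Limits of the pairs `(fⁿ x, fⁿ y)` stay `c`-close under all iterates, positive and negative,
  -- hence lie on the diagonal by expansiveness.
  refine tendsto_iff_ultrafilter _ _ _ |>.2 fun g hg => ?_
  obtain ⟨⟨p, q⟩, -, hpq⟩ := isCompact_univ.ultrafilter_le_nhds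
    (g.map fun n : ℕ => ((f ^ (n : ℤ)) x, (f ^ (n : ℤ)) y)) (by simp)
  have hlim (φ : X × X → ℝ) (hφ : Continuous φ) :
      Tendsto (fun n : ℕ => φ ((f ^ (n : ℤ)) x, (f ^ (n : ℤ)) y)) g (𝓝 (φ (p, q))) :=
    (hφ.tendsto _).comp hpq
  have hclose (j : ℤ) : dist ((f ^ j) p) ((f ^ j) q) ≤ c := by
    have hj := continuous_zpow_perm hf hf' j
    refine le_of_tendsto (hlim (fun z => dist ((f ^ j) z.1) ((f ^ j) z.2)) (by fun_prop)) ?_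
    filter_upwards [hg (eventually_ge_atTop j.natAbs)] with n hn
    obtain ⟨m, hm⟩ : ∃ m : ℕ, j + n = m := ⟨(j + n).toNat, by omega⟩
    simpa only [← Equiv.Perm.mul_apply, ← zpow_add, hm] using (hy m).le
  obtain rfl : p = q := by
    by_contra hne
    obtain ⟨j, hj⟩ := hexp p q hne
    exact (hclose j).not_gt hj
  simpa using hlim (fun z => dist z.1 z.2) continuous_dist

lemma Expansive.wu_subset_unstableSet [CompactSpace X] (hexp : Expansive f c) (hf : Continuous f)
    (hf' : Continuous f.symm) : Wu f c x ⊆ unstableSet f x := by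
  rw [wu_eq_ws_inv, unstableSet_eq_stableSet_inv]
  exact hexp.inv.ws_subset_stableSet hf' hf

lemma Expansive.subsingleton_ws_inter_wu (hexp : Expansive f c) (x y : X) :
    (Ws f (c / 2) x ∩ Wu f (c / 2) y).Subsingleton := by
  rintro p ⟨hps, hpu⟩ q ⟨hqs, hqu⟩
  by_contra hne
  obtain ⟨j, hj⟩ := hexp p q hne
  refine hj.not_gt ?_
  obtain ⟨k, rfl | rfl⟩ := j.eq_nat_or_neg
  · linarith [dist_triangle_left ((f ^ (k : ℤ)) p) ((f ^ (k : ℤ)) q) ((f ^ (k : ℤ)) x),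
      hps k, hqs k]
  · linarith [dist_triangle_left ((f ^ (-k : ℤ)) p) ((f ^ (-k : ℤ)) q) ((f ^ (-k : ℤ)) y),
      hpu k, hqu k]

end Dynamics

section SeparatedFibers

variable {X Y : Type*} [MetricSpace X] {π : X → Y} {s η : ℝ}

/-- Uniform local injectivity: distinct points in a common fibre of `π` are more than `s` apart. -/
def FiberSeparated (s : ℝ) (π : X → Y) : Prop :=
  ∀ ⦃p q : X⦄, π p = π q → dist p q ≤ s → p = q

lemma FiberSeparated.exists_injOn_fiber (hsep : FiberSeparated s π) {y : Y} {B : Set X}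
    (hη : η ≤ s / 2) (hy : π ⁻¹' {y} ⊆ thickening η B) :
    ∃ φ : X → X, MapsTo φ (π ⁻¹' {y}) B ∧ InjOn φ (π ⁻¹' {y}) ∧
      ∀ x ∈ π ⁻¹' {y}, dist x (φ x) < η := by
  have hclose (x : X) (hx : x ∈ π ⁻¹' {y}) : ∃ z ∈ B, dist x z < η :=
    mem_thickening_iff.1 (hy hx)
  choose! φ hφB hφ using hclose
  refine ⟨φ, hφB, fun p hp q hq hpq => hsep (hp.trans hq.symm) ?_, hφ⟩
  have hqp : dist q (φ p) < η := hpq ▸ hφ q hq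
  linarith [dist_triangle_right p q (φ p), hφ p hp]

lemma FiberSeparated.finite_fiber [CompactSpace X] [TopologicalSpace Y] [T1Space Y]
    (hsep : FiberSeparated s π) (hs : 0 < s) (hπ : Continuous π) (y : Y) : (π ⁻¹' {y}).Finite := by
  have hcompact : IsCompact (π ⁻¹' {y}) := (isClosed_singleton.preimage hπ).isCompact
  refine hcompact.finite ⟨.of_forall_le_dist hs fun p q hpq => ?_⟩
  by_contra! hlt
  exact hpq (Subtype.ext (hsep (p.2.trans q.2.symm) hlt.le))

variable [MetricSpace Y]

lemma FiberSeparated.exists_dist_lt [CompactSpace X] (hsep : FiberSeparated s π)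
    (hπ : Continuous π) (hη : 0 < η) :
    ∃ δ > 0, ∀ p q, dist p q ≤ s → dist (π p) (π q) < δ → dist p q < η := by
  have hclosed : IsClosed {z : X × X | dist z.1 z.2 ≤ s ∧ η ≤ dist z.1 z.2} :=
    (isClosed_le continuous_dist continuous_const).inter
      (isClosed_le continuous_const continuous_dist)
  have hcont : Continuous fun z : X × X => dist (π z.1) (π z.2) := by fun_prop
  obtain ⟨δ, hδ, hle⟩ := hclosed.isCompact.exists_forall_le' hcont.continuousOn (a := 0) <| by
    rintro ⟨p, q⟩ ⟨hps, hpη⟩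
    refine dist_pos.2 fun hpq => (hη.trans_le hpη).ne' ?_
    exact dist_eq_zero.2 (hsep hpq hps)
  refine ⟨δ, hδ, fun p q hpq hd => ?_⟩
  by_contra! hηpq
  exact (hle (p, q) ⟨hpq, hηpq⟩).not_gt hd

lemma exists_preimage_ball_subset_thickening_fiber [CompactSpace X] (hπ : Continuous π)
    (hη : 0 < η) (y : Y) : ∃ r > 0, π ⁻¹' ball y r ⊆ thickening η (π ⁻¹' {y}) := by
  refine (nhds_basis_ball.comap π).mem_iff.1 ?_
  rw [hπ.isClosedMap.comap_nhds_eq hπ]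
  exact isOpen_thickening.mem_nhdsSet.2 (self_subset_thickening hη _)

lemma FiberSeparated.exists_ball_subset_image_ball_of_mem_ball [CompactSpace X] [Nonempty Y]
    (hsep : FiberSeparated s π) (hs : 0 < s) (hπ : Continuous π) (hη : 0 < η) :
    ∃ y₀, ∃ r > 0, ∀ x, π x ∈ ball y₀ r → ball y₀ r ⊆ π '' ball x η := by
  -- Near a point whose fibre has the least number of points, the injection of a fibre into that
  -- one must be onto.
  let y₀ := argmin fun y => (π ⁻¹' {y}).ncard
  have hmin (y : Y) : (π ⁻¹' {y₀}).ncard ≤ (π ⁻¹' {y}).ncard :=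
    argmin_le (fun y => (π ⁻¹' {y}).ncard) y
  let ρ := min (s / 2) (η / 2)
  have hρs : ρ ≤ s / 2 := min_le_left _ _
  have hρη : ρ ≤ η / 2 := min_le_right _ _
  obtain ⟨r, hr, hthick⟩ :=
    exists_preimage_ball_subset_thickening_fiber hπ (show 0 < ρ by positivity) y₀
  refine ⟨y₀, r, hr, fun x hx w hw => ?_⟩
  have hfiber : π ⁻¹' {w} ⊆ thickening ρ (π ⁻¹' {y₀}) :=
    (preimage_mono (singleton_subset_iff.2 hw)).trans hthick
  obtain ⟨φ, hmaps, hinj, hφ⟩ := hsep.exists_injOn_fiber hρs hfiber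
  have honto : φ '' (π ⁻¹' {w}) = π ⁻¹' {y₀} :=
    eq_of_subset_of_ncard_le hmaps.image_subset (hinj.ncard_image ▸ hmin w)
      (hsep.finite_fiber hs hπ y₀)
  obtain ⟨x₀, hx₀, hxx₀⟩ := mem_thickening_iff.1 (hthick hx)
  obtain ⟨v, hv, rfl⟩ := honto.symm ▸ hx₀
  refine ⟨v, mem_ball'.2 ?_, hv⟩
  linarith [dist_triangle_right x v (φ v), hφ v hv]

lemma FiberSeparated.isLocallyConstant_ncard_fiber [CompactSpace X] (hsep : FiberSeparated s π)
    (hs : 0 < s) (hπ : Continuous π) {δ : ℝ} (hδ : 0 < δ)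
    (hopen : ∀ x, ball (π x) δ ⊆ π '' ball x (s / 2)) :
    IsLocallyConstant fun y => (π ⁻¹' {y}).ncard := by
  have hle (y z : Y) (hyz : z ∈ ball y δ) : (π ⁻¹' {y}).ncard ≤ (π ⁻¹' {z}).ncard := by
    have hthick : π ⁻¹' {y} ⊆ thickening (s / 2) (π ⁻¹' {z}) := by
      rintro x rfl
      obtain ⟨v, hv, hvz⟩ := hopen x hyz
      exact mem_thickening_iff.2 ⟨v, hvz, mem_ball'.1 hv⟩
    obtain ⟨φ, hmaps, hinj, -⟩ := hsep.exists_injOn_fiber le_rfl hthick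
    exact ncard_le_ncard_of_injOn φ hmaps hinj (hsep.finite_fiber hs hπ z)
  refine (IsLocallyConstant.iff_eventually_eq _).2 fun y => ?_
  filter_upwards [ball_mem_nhds y hδ] with z hz
  exact (hle z y (mem_ball_comm.1 hz)).antisymm (hle y z hz)

end SeparatedFibers

section Semiconj

variable {X Y : Type*} {F : Equiv.Perm X} {f : Equiv.Perm Y} {π : X → Y}

lemma semiconj_inv (h : Semiconj π F f) : Semiconj π ⇑F⁻¹ ⇑f⁻¹ :=
  h.inverses_right F.right_inv f.left_inv

lemma ncard_fiber_apply (h : Semiconj π F f) (y : Y) :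
    (π ⁻¹' {f y}).ncard = (π ⁻¹' {y}).ncard := by
  have hfiber : F ⁻¹' (π ⁻¹' {f y}) = π ⁻¹' {y} := by
    ext x
    simp [h.eq]
  rw [← hfiber, ← F.image_symm_eq_preimage, ncard_image_of_injective _ F.symm.injective]

variable [MetricSpace X]

lemma UResolving.inv (hu : UResolving F π) : SResolving F⁻¹ π := fun x =>
  unstableSet_eq_stableSet_inv F x ▸ hu x

lemma SResolving.inv (hs : SResolving F π) : UResolving F⁻¹ π := fun x =>
  stableSet_eq_unstableSet_inv F x ▸ hs x

end Semiconj

section Resolving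

variable {X Y : Type*} [MetricSpace X] [MetricSpace Y] {F : Equiv.Perm X} {f : Equiv.Perm Y}
  {π : X → Y} {c ε ε' δ : ℝ}

lemma IsFactorMap.inv (h : IsFactorMap F f π) : IsFactorMap F⁻¹ f⁻¹ π :=
  ⟨h.1, h.2.1, semiconj_inv h.2.2⟩

lemma mapsTo_ws (h : Semiconj π F f) (hπ : ∀ ⦃p q⦄, dist p q < ε → dist (π p) (π q) < ε')
    (x : X) : MapsTo π (Ws F ε x) (Ws f ε' (π x)) := by
  intro y hy
  rw [mem_ws_iff_iterate] at hy ⊢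
  intro n
  rw [← h.iterate_right n, ← h.iterate_right n]
  exact hπ (hy n)

lemma mapsTo_wu (h : Semiconj π F f) (hπ : ∀ ⦃p q⦄, dist p q < ε → dist (π p) (π q) < ε')
    (x : X) : MapsTo π (Wu F ε x) (Wu f ε' (π x)) := by
  rw [wu_eq_ws_inv, wu_eq_ws_inv]
  exact mapsTo_ws (semiconj_inv h) hπ x

lemma UResolving.exists_mem_ws_of_dist_lt [CompactSpace X] (hu : UResolving F π) (hF : IsSmale F)
    (hπ : Continuous π) (h : Semiconj π F f) (hc : 0 < c) (hf : Expansive f c) (hε : 0 < ε) :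
    ∃ η > 0, ∀ p q, dist p q < η → π q ∈ Ws f (c / 2) (π p) → q ∈ Ws F ε p := by
  obtain ⟨hcont, hcont_symm, ⟨cX, hcX, hexp⟩, ε₀, hε₀, hbracket⟩ := hF
  obtain ⟨μ, hμ, hπμ⟩ :=
    uniformContinuous_iff.1 (CompactSpace.uniformContinuous_of_continuous hπ) _ (half_pos hc)
  obtain ⟨ρ, hρ, hρε, hρc, hρε₀, hρμ⟩ : ∃ ρ > 0, ρ ≤ ε ∧ ρ ≤ cX ∧ ρ ≤ ε₀ ∧ ρ ≤ μ :=
    ⟨min (min ε cX) (min ε₀ μ), by positivity, by simp, by simp, by simp, by simp⟩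
  have hπρ ⦃p q : X⦄ (hpq : dist p q < ρ) : dist (π p) (π q) < c / 2 := hπμ (hpq.trans_le hρμ)
  obtain ⟨η, hη, hbracket⟩ := hbracket ρ hρ hρε₀
  refine ⟨η, hη, fun p q hpq hstable => ?_⟩
  -- The bracket `z` of `p` and `q` lies on the unstable set of `q` and has the same image as `q`.
  obtain ⟨z, ⟨hzs, hzu⟩, -⟩ := hbracket p q hpq
  have hπz : π z = π q := hf.subsingleton_ws_inter_wu (π p) (π q)
    ⟨mapsTo_ws h hπρ p hzs, mapsTo_wu h hπρ q hzu⟩ ⟨hstable, mem_wu_self (half_pos hc)⟩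
  obtain rfl : z = q :=
    hu q (hexp.wu_subset_unstableSet hcont hcont_symm (wu_mono hρc hzu)) mem_unstableSet_self hπz
  exact ws_mono hρε hzs

lemma exists_fiberSeparated [CompactSpace X] (hF : IsSmale F) (hπ : Continuous π)
    (h : Semiconj π F f) (hu : UResolving F π) (hs : SResolving F π) (hc : 0 < c)
    (hf : Expansive f c) : ∃ s > 0, FiberSeparated s π := by
  obtain ⟨cX, hcX, hexp⟩ := hF.2.2.1
  obtain ⟨η, hη, hstable⟩ := hu.exists_mem_ws_of_dist_lt hF hπ h hc hf hcX
  refine ⟨η / 2, half_pos hη, fun p q hpq hd => ?_⟩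
  have hq : q ∈ Ws F cX p :=
    hstable p q (hd.trans_lt (half_lt_self hη)) (hpq ▸ mem_ws_self (half_pos hc))
  exact hs p mem_stableSet_self (hexp.ws_subset_stableSet hF.1 hF.2.1 hq) hpq

lemma exists_mem_ws_of_dist_iterate_lt [CompactSpace X] (hF : IsSmale F) (hπ : Continuous π)
    (h : Semiconj π F f) (hu : UResolving F π) (hs : SResolving F π) (hc : 0 < c)
    (hf : Expansive f c) (hε : 0 < ε) :
    ∃ η > 0, ∃ δ > 0, ∀ (n : ℕ) (x v : X), dist (F^[n] x) (F^[n] v) < η →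
      π v ∈ Ws f δ (π x) → v ∈ Ws F ε x := by
  obtain ⟨s, hs₀, hsep⟩ := exists_fiberSeparated hF hπ h hu hs hc hf
  obtain ⟨μ, hμ, hFμ⟩ :=
    uniformContinuous_iff.1 (CompactSpace.uniformContinuous_of_continuous hF.2.1) _ hs₀
  obtain ⟨ρ, hρ, hρε, hρμ⟩ : ∃ ρ > 0, ρ ≤ ε ∧ ρ ≤ μ := ⟨min ε μ, by positivity, by simp, by simp⟩
  obtain ⟨η, hη, hbase⟩ := hu.exists_mem_ws_of_dist_lt hF hπ h hc hf hρ
  obtain ⟨δ, hδ, hclose⟩ := hsep.exists_dist_lt hπ hρ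
  refine ⟨η, hη, min δ (c / 2), by positivity, fun n x v hd hv => ws_mono hρε ?_⟩
  induction n generalizing x v with
  | zero => exact hbase x v hd (ws_mono (min_le_right _ _) hv)
  | succ n ih =>
    -- Pulling back one step, `x` and `v` stay within the separation constant by continuity of
    -- `F⁻¹`, hence within `ρ` because their images are close.
    obtain ⟨hdist, hnext⟩ := mem_ws_iff_dist_lt_and_apply_mem.1 hv
    have hFv : F v ∈ Ws F ρ (F x) := ih (F x) (F v) hd (by rwa [h.eq, h.eq])
    have hxv : dist x v < s := by
      simpa only [Equiv.symm_apply_apply] using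
        hFμ ((dist_lt_of_mem_ws hFv).trans_le hρμ)
    exact mem_ws_iff_dist_lt_and_apply_mem.2
      ⟨hclose x v hxv.le (hdist.trans_le (min_le_left _ _)), hFv⟩

lemma exists_ws_subset_image_of_iterate_mem [CompactSpace X] [Nonempty Y] (hF : IsSmale F)
    (hπ : Continuous π) (h : Semiconj π F f) (hu : UResolving F π) (hs : SResolving F π)
    (hc : 0 < c) (hf : Expansive f c) (hε : 0 < ε) :
    ∃ δ > 0, ∃ O : Set Y, IsOpen O ∧ O.Nonempty ∧
      ∀ (n : ℕ) (x : X), π (F^[n] x) ∈ O → Ws f δ (π x) ⊆ π '' Ws F ε x := by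
  obtain ⟨s, hs₀, hsep⟩ := exists_fiberSeparated hF hπ h hu hs hc hf
  obtain ⟨η, hη, δ, hδ, hstable⟩ := exists_mem_ws_of_dist_iterate_lt hF hπ h hu hs hc hf hε
  obtain ⟨y₀, r, hr, hlift⟩ := hsep.exists_ball_subset_image_ball_of_mem_ball hs₀ hπ hη
  refine ⟨min δ (r / 2), by positivity, ball y₀ (r / 2), isOpen_ball,
    nonempty_ball.2 (half_pos hr), fun n x hx w hw => ?_⟩
  have hxw : dist (π (F^[n] x)) (f^[n] w) < r / 2 := by
    rw [h.iterate_right n]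
    exact (mem_ws_iff_iterate.1 hw n).trans_le (min_le_right _ _)
  have hwr : f^[n] w ∈ ball y₀ r := by
    have htri := dist_triangle_left (f^[n] w) y₀ (π (F^[n] x))
    rw [mem_ball] at hx ⊢
    linarith
  obtain ⟨v', hv', hπv'⟩ := hlift _ (ball_subset_ball (by linarith) hx) hwr
  obtain ⟨v, rfl⟩ := F.surjective.iterate n v'
  have hπv : π v = w := f.injective.iterate n ((h.iterate_right n v).symm.trans hπv')
  exact ⟨v, hstable n x v (mem_ball'.1 hv') (hπv ▸ ws_mono (min_le_left _ _) hw), hπv⟩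

lemma exists_dense_ws_subset_image [CompactSpace X] [Nonempty Y] (hF : IsSmale F)
    (hFt : TopTransitive F) (hπ : IsFactorMap F f π) (hu : UResolving F π) (hs : SResolving F π)
    (hc : 0 < c) (hf : Expansive f c) (hε : 0 < ε) :
    ∃ δ > 0, ∃ D : Set X, IsOpen D ∧ Dense D ∧ ∀ x ∈ D, Ws f δ (π x) ⊆ π '' Ws F ε x := by
  obtain ⟨hcont, hsurj, h⟩ := hπ
  obtain ⟨δ, hδ, O, hO, hne, hlift⟩ :=
    exists_ws_subset_image_of_iterate_mem hF hcont h hu hs hc hf hε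
  have hO' : IsOpen (π ⁻¹' O) := hO.preimage hcont
  refine ⟨δ, hδ, ⋃ n : ℕ, F^[n] ⁻¹' (π ⁻¹' O), isOpen_iUnion fun n => hO'.preimage (hF.1.iterate n),
    hFt.dense_iUnion_preimage hO' (hne.preimage hsurj), fun x hx => ?_⟩
  obtain ⟨n, hn⟩ := mem_iUnion.1 hx
  exact hlift n x hn

lemma exists_ball_subset_image_ball_of_local_product [CompactSpace X] (hF : IsSmale F)
    (hf : IsSmale f) (hπ : Continuous π) (h : Semiconj π F f) (hε : 0 < ε) :
    ∃ ε' > 0, ∀ ρ > 0, ∃ δ > 0, ∀ x, Ws f ρ (π x) ⊆ π '' Ws F ε' x →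
      Wu f ρ (π x) ⊆ π '' Wu F ε' x → ball (π x) δ ⊆ π '' ball x ε := by
  obtain ⟨-, -, -, εX, hεX, hbracketX⟩ := hF
  obtain ⟨-, -, ⟨c, hc, hexp⟩, εY, hεY, hbracketY⟩ := hf
  obtain ⟨μ, hμ, hπμ⟩ :=
    uniformContinuous_iff.1 (CompactSpace.uniformContinuous_of_continuous hπ) _ (half_pos hc)
  obtain ⟨κ, hκ, hκX, hκε, hκμ⟩ : ∃ κ > 0, κ ≤ εX ∧ κ ≤ ε / 2 ∧ κ ≤ μ :=
    ⟨min εX (min (ε / 2) μ), by positivity, by simp, by simp, by simp⟩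
  have hπκ ⦃p q : X⦄ (hpq : dist p q < κ) : dist (π p) (π q) < c / 2 := hπμ (hpq.trans_le hκμ)
  obtain ⟨δX, hδX, hbracketX⟩ := hbracketX κ hκ hκX
  refine ⟨min (δX / 2) (ε / 2), by positivity, fun ρ hρ => ?_⟩
  obtain ⟨ν, hν, hνY, hνρ, hνc⟩ : ∃ ν > 0, ν ≤ εY ∧ ν ≤ ρ ∧ ν ≤ c / 2 :=
    ⟨min εY (min ρ (c / 2)), by positivity, by simp, by simp, by simp⟩
  obtain ⟨δY, hδY, hbracketY⟩ := hbracketY ν hν hνY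
  refine ⟨δY, hδY, fun x hws hwu y hy => ?_⟩
  obtain ⟨a, ⟨has, hau⟩, -⟩ := hbracketY (π x) y (mem_ball'.1 hy)
  obtain ⟨b, ⟨hbs, hbu⟩, -⟩ := hbracketY y (π x) (mem_ball.1 hy)
  obtain ⟨a, ha, rfl⟩ := hws (ws_mono hνρ has)
  obtain ⟨b, hb, rfl⟩ := hwu (wu_mono hνρ hbu)
  have hxa := dist_lt_of_mem_ws ha
  have hxb := dist_lt_of_mem_wu hb
  rw [lt_min_iff] at hxa hxb
  have hba : dist b a < δX := by linarith [dist_triangle_left b a x]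
  obtain ⟨z, ⟨hzs, hzu⟩, -⟩ := hbracketX b a hba
  refine ⟨z, mem_ball'.2 ?_, hexp.subsingleton_ws_inter_wu (π b) (π a)
    ⟨mapsTo_ws h hπκ b hzs, mapsTo_wu h hπκ a hzu⟩
    ⟨ws_mono hνc (mem_ws_comm.1 hbs), wu_mono hνc (mem_wu_comm.1 hau)⟩⟩
  linarith [dist_triangle x b z, dist_lt_of_mem_ws hzs]

lemma ball_subset_image_ball_of_dense (hπ : Continuous π) {D : Set X} (hD : Dense D)
    (hball : ∀ x ∈ D, ball (π x) δ ⊆ π '' ball x ε) (hε : ε < ε') (x : X) :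
    ball (π x) δ ⊆ π '' ball x ε' := by
  intro y hy
  have hV : IsOpen (π ⁻¹' ball y δ ∩ ball x (ε' - ε)) := (isOpen_ball.preimage hπ).inter isOpen_ball
  obtain ⟨z, ⟨hzy, hzx⟩, hzD⟩ := hD.inter_open_nonempty _ hV
    ⟨x, mem_ball_comm.1 hy, mem_ball_self (sub_pos.2 hε)⟩
  obtain ⟨v, hv, rfl⟩ := hball z hzD (mem_ball_comm.1 hzy)
  refine ⟨v, ?_, rfl⟩
  rw [mem_ball] at *
  linarith [dist_triangle v z x]

lemma exists_ball_subset_image_ball [CompactSpace X] [Nonempty Y] (hF : IsSmale F)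
    (hFt : TopTransitive F) (hf : IsSmale f) (hπ : IsFactorMap F f π) (hu : UResolving F π)
    (hs : SResolving F π) (hε : 0 < ε) : ∃ δ > 0, ∀ x, ball (π x) δ ⊆ π '' ball x ε := by
  obtain ⟨c, hc, hexp⟩ := hf.2.2.1
  obtain ⟨ε', hε', hproduct⟩ :=
    exists_ball_subset_image_ball_of_local_product hF hf hπ.1 hπ.2.2 (half_pos hε)
  obtain ⟨ρs, hρs, Ds, hDs, hDs', hws⟩ :=
    exists_dense_ws_subset_image hF hFt hπ hu hs hc hexp hε'
  obtain ⟨ρu, hρu, Du, -, hDu', hwu⟩ :=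
    exists_dense_ws_subset_image hF.inv hFt.inv hπ.inv hs.inv hu.inv hc hexp.inv hε'
  simp only [← wu_eq_ws_inv] at hwu
  obtain ⟨δ, hδ, hball⟩ := hproduct (min ρs ρu) (lt_min hρs hρu)
  refine ⟨δ, hδ, ball_subset_image_ball_of_dense hπ.1 (hDs'.inter_of_isOpen_left hDu' hDs)
    (fun x hx => hball x ?_ ?_) (half_lt_self hε)⟩
  · exact (ws_mono (min_le_left _ _)).trans (hws x hx.1)
  · exact (wu_mono (min_le_right _ _)).trans (hwu x hx.2)

end Resolving

/-- A u-resolving and s-resolving factor map between transitive Smale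
spaces is constant-to-one. -/
theorem stmt10 {X Y : Type*} [MetricSpace X] [CompactSpace X] [MetricSpace Y] [CompactSpace Y]
    (F : Equiv.Perm X) (f : Equiv.Perm Y)
    (hX : IsSmale F) (hXt : TopTransitive F) (hY : IsSmale f) (hYt : TopTransitive f)
    (π : X → Y) (hπ : IsFactorMap F f π)
    (hu : UResolving F π) (hs : SResolving F π) :
    ∃ k : ℕ, ∀ y : Y, (π ⁻¹' {y}).ncard = k := by
  obtain hY₀ | hY₀ := isEmpty_or_nonempty Y
  · exact ⟨0, isEmptyElim⟩
  obtain ⟨c, hc, hexp⟩ := hY.2.2.1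
  obtain ⟨s, hs₀, hsep⟩ := exists_fiberSeparated hX hπ.1 hπ.2.2 hu hs hc hexp
  obtain ⟨δ, hδ, hopen⟩ := exists_ball_subset_image_ball hX hXt hY hπ hu hs (half_pos hs₀)
  have hlocal : IsLocallyConstant fun y => (π ⁻¹' {y}).ncard :=
    hsep.isLocallyConstant_ncard_fiber hs₀ hπ.1 hδ hopen
  exact ⟨(π ⁻¹' {Classical.arbitrary Y}).ncard, fun y =>
    hYt.eq_of_isLocallyConstant hlocal (ncard_fiber_apply hπ.2.2) y (Classical.arbitrary Y)⟩
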